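/- A smooth map V : ℝ^{n+1} → ℝ^{n+1} that is tangent along M^n(C) is a concircular vector field on M^n(C) with concircular factor μ if and only if there exists a constant vector p₀ ∈ ℝ^{n+1} such that V(p) = p₀ − C⟨p₀,p⟩·p for every p ∈ M^n(C); in that case μ(p) = −C⟨p₀,p⟩ for every p ∈ M^n(C) (i.e. V is the tangential part of the constant vector field p₀). -/

import Mathlib

/-!
Write `ρ x = (R / √(ε⟨x,x⟩)) x` for the radial retraction of the open cone over `M = M^n(C)` onto `M`.

Suppose `V` is concircular and let `p, q ∈ M` be independent. The arc `ρ((1-t)p + tq)` joins `p` to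
`q` in `M ∩ span(p,q)`. If `e` is orthogonal to `p` and `q`, the concircular equation makes the
derivative of `⟨V,e⟩` along the arc vanish, since both the arc and its velocity are orthogonal
to `e`. Hence `⟨V q - V p, e⟩ = 0` for all such `e`, and nondegeneracy gives
`V q - V p ∈ span(p,q)` (`sub_mem_span`). No second derivative of `V` is needed.

So two independent points `p, q` determine a vector `P` with `V p - P ∈ ℝp` and `V q - P ∈ ℝq`, and
for any `r ∈ M` independent of them `V r - P` lies in `span(p,r) ∩ span(q,r) = ℝr` (`transfer`). This
is where `n ≥ 2` enters: `M` contains three independent points, and by exchange every point of `M` is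
independent of two of them, so `V r - P ∈ ℝr` for all `r ∈ M`. Tangency of `V` fixes the coefficient.

The factor `μ`, and the converse, follow by comparing derivatives: two maps that agree on `M` have the
same derivative in tangent directions (`fderiv_eq_of_eqOn`), as seen along `t ↦ ρ(p + tw)`.
-/

/-- The bilinear form ⟨x,y⟩ = ε x₁y₁ + x₂y₂ + ⋯ on ℝ^m. -/
noncomputable def form (ε : ℝ) {m : ℕ} [NeZero m] (x y : Fin m → ℝ) : ℝ :=
  (ε - 1) * (x 0 * y 0) + ∑ i, x i * y i

/-- The space form M^n(C), C = ε/R²: the quadric ⟨p,p⟩ = 1/C, taking the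
component x₁ > 0 (hyperbolic space) when ε = -1. -/
def SpaceForm (ε R : ℝ) (n : ℕ) : Set (Fin (n + 1) → ℝ) :=
  {p | form ε p p = 1 / (ε / R ^ 2) ∧ (ε = -1 → 0 < p 0)}

/-! ### The bilinear form -/

section Form

variable {m : ℕ} [NeZero m] {ε : ℝ}

lemma form_comm (x y : Fin m → ℝ) : form ε x y = form ε y x := by
  simp only [form, mul_comm]

lemma form_add_left (x y z : Fin m → ℝ) : form ε (x + y) z = form ε x z + form ε y z := by
  simp only [form, Pi.add_apply, add_mul, Finset.sum_add_distrib]; ring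

lemma form_smul_left (a : ℝ) (x z : Fin m → ℝ) : form ε (a • x) z = a * form ε x z := by
  simp only [form, Pi.smul_apply, smul_eq_mul, mul_add, Finset.mul_sum, mul_assoc]; ring

lemma form_sub_left (x y z : Fin m → ℝ) : form ε (x - y) z = form ε x z - form ε y z := by
  have h := form_add_left (ε := ε) (x - y) y z
  rw [sub_add_cancel] at h; linarith

lemma form_add_right (x y z : Fin m → ℝ) : form ε z (x + y) = form ε z x + form ε z y := by
  rw [form_comm, form_add_left, form_comm x, form_comm y]

lemma form_smul_right (a : ℝ) (x z : Fin m → ℝ) : form ε z (a • x) = a * form ε z x := by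
  rw [form_comm, form_smul_left, form_comm x]

lemma form_sub_right (x y z : Fin m → ℝ) : form ε z (x - y) = form ε z x - form ε z y := by
  rw [form_comm, form_sub_left, form_comm x, form_comm y]

/-- The linear functional `⟨x, ·⟩`. -/
noncomputable def formL (ε : ℝ) (x : Fin m → ℝ) : (Fin m → ℝ) →ₗ[ℝ] ℝ where
  toFun y := form ε x y
  map_add' y z := form_add_right y z x
  map_smul' a y := form_smul_right a y x

lemma form_single_right (x : Fin m → ℝ) (i : Fin m) :
    form ε x (Pi.single i 1) = if i = 0 then ε * x i else x i := by
  by_cases h : i = 0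
  · subst h; simp [form, Pi.single_apply]; ring
  · simp [form, h, Ne.symm h, Pi.single_apply]

/-- The form is nondegenerate. -/
lemma eq_of_form_eq (hε : ε = 1 ∨ ε = -1) {x y : Fin m → ℝ}
    (h : ∀ z, form ε x z = form ε y z) : x = y := by
  have h0 : ε ≠ 0 := by rcases hε with h | h <;> rw [h] <;> norm_num
  funext i
  have := h (Pi.single i 1)
  simp only [form_single_right] at this
  split_ifs at this
  · exact mul_left_cancel₀ h0 this
  · exact this

/-- `{p,q}^⊥⊥ = span(p,q)`. -/
lemma exists_of_forall_orthogonal (hε : ε = 1 ∨ ε = -1) (p q v : Fin m → ℝ)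
    (h : ∀ e, form ε p e = 0 → form ε q e = 0 → form ε v e = 0) :
    ∃ a b : ℝ, v = a • p + b • q := by
  have key : formL ε v ∈ Submodule.span ℝ (Set.range ![formL ε p, formL ε q]) := by
    apply mem_span_of_iInf_ker_le_ker
    intro e he
    simp only [Submodule.mem_iInf, LinearMap.mem_ker] at he ⊢
    exact h e (he 0) (he 1)
  rw [Matrix.range_cons, Matrix.range_cons, Matrix.range_empty, Set.union_empty,
    Set.singleton_union, Submodule.mem_span_pair] at key
  obtain ⟨a, b, hab⟩ := key
  refine ⟨a, b, eq_of_form_eq hε fun z => ?_⟩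
  rw [form_add_left, form_smul_left, form_smul_left]
  exact (LinearMap.congr_fun hab z).symm

lemma hasDerivAt_form {f g : ℝ → Fin m → ℝ} {f' g' : Fin m → ℝ} {t : ℝ}
    (hf : HasDerivAt f f' t) (hg : HasDerivAt g g' t) :
    HasDerivAt (fun s => form ε (f s) (g s)) (form ε f' (g t) + form ε (f t) g') t := by
  rw [hasDerivAt_pi] at hf hg
  have h1 := ((hf 0).mul (hg 0)).const_mul (ε - 1)
  have h2 := HasDerivAt.fun_sum (u := Finset.univ) fun i _ => (hf i).mul (hg i)
  refine (h1.fun_add h2).congr_deriv ?_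
  simp only [form, Finset.sum_add_distrib]; ring

end Form

/-! ### The radial retraction onto the space form -/

section Retraction

variable {n : ℕ} {ε R : ℝ}

lemma form_self (hε : ε = 1 ∨ ε = -1) {p : Fin (n + 1) → ℝ}
    (hp : p ∈ SpaceForm ε R n) : form ε p p = ε * R ^ 2 := by
  rw [hp.1]; rcases hε with h | h <;> rw [h] <;> simp [div_neg]

/-- The open cone over the space form: the positive multiples of its points. -/
def Cone (ε : ℝ) (n : ℕ) : Set (Fin (n + 1) → ℝ) :=
  {x | 0 < ε * form ε x x ∧ (ε = -1 → 0 < x 0)}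

/-- The radial retraction of the cone onto the space form. -/
noncomputable def retr (ε R : ℝ) (x : Fin (n + 1) → ℝ) : Fin (n + 1) → ℝ :=
  (R / √(ε * form ε x x)) • x

lemma isOpen_cone : IsOpen (Cone ε n) := by
  have hc : Continuous fun x : Fin (n + 1) → ℝ => ε * form ε x x := by
    unfold form; fun_prop
  have h0 : IsOpen {x : Fin (n + 1) → ℝ | ε = -1 → 0 < x 0} := by
    by_cases h : ε = -1
    · simpa [h] using isOpen_lt continuous_const (continuous_apply (0 : Fin (n + 1)))
    · simp [h]
  exact (isOpen_lt continuous_const hc).inter h0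

lemma retr_mem (hε : ε = 1 ∨ ε = -1) (hR : 0 < R) {x : Fin (n + 1) → ℝ} (hx : x ∈ Cone ε n) :
    retr ε R x ∈ SpaceForm ε R n := by
  have hs := Real.sqrt_pos.2 hx.1
  refine ⟨?_, fun h => mul_pos (div_pos hR hs) (hx.2 h)⟩
  have h2 := Real.sq_sqrt hx.1.le
  have hε2 : ε * ε = 1 := by rcases hε with h | h <;> rw [h] <;> norm_num
  have hε0 : ε ≠ 0 := by rintro rfl; simp at hε2
  have hC : 1 / (ε / R ^ 2) = ε * R ^ 2 := by
    rcases hε with h | h <;> rw [h] <;> simp [div_neg]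
  rw [hC, retr, form_smul_left, form_smul_right]
  have hf : form ε x x = ε * √(ε * form ε x x) ^ 2 := by
    rw [h2]; linear_combination (-form ε x x) * hε2
  generalize √(ε * form ε x x) = s at hs hf
  rw [hf]; field_simp

lemma mem_cone (hε : ε = 1 ∨ ε = -1) (hR : 0 < R) {p : Fin (n + 1) → ℝ}
    (hp : p ∈ SpaceForm ε R n) : p ∈ Cone ε n := by
  refine ⟨?_, hp.2⟩
  rw [form_self hε hp]
  rcases hε with h | h <;> rw [h] <;> nlinarith [pow_pos hR 2]

lemma scale_eq_one (hε : ε = 1 ∨ ε = -1) (hR : 0 < R) {p : Fin (n + 1) → ℝ}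
    (hp : p ∈ SpaceForm ε R n) : R / √(ε * form ε p p) = 1 := by
  have : ε * form ε p p = R ^ 2 := by
    rw [form_self hε hp]; rcases hε with h | h <;> rw [h] <;> ring
  rw [this, Real.sqrt_sq hR.le, div_self hR.ne']

lemma retr_self (hε : ε = 1 ∨ ε = -1) (hR : 0 < R) {p : Fin (n + 1) → ℝ}
    (hp : p ∈ SpaceForm ε R n) : retr ε R p = p := by
  rw [retr, scale_eq_one hε hR hp, one_smul]

/-- The velocity of a retracted curve is tangent to the space form. -/
lemma hasDerivAt_retr (hε : ε = 1 ∨ ε = -1) (hR : 0 < R) {c : ℝ → Fin (n + 1) → ℝ}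
    {c' : Fin (n + 1) → ℝ} {t : ℝ} (hc : HasDerivAt c c' t) (ht : c t ∈ Cone ε n) :
    ∃ k : ℝ, HasDerivAt (fun s => retr ε R (c s))
        (k • c t + (R / √(ε * form ε (c t) (c t))) • c') t ∧
      form ε (k • c t + (R / √(ε * form ε (c t) (c t))) • c') (retr ε R (c t)) = 0 := by
  have h1 := (((hasDerivAt_form (ε := ε) hc hc).const_mul ε).sqrt ht.1.ne')
  have h2 := h1.fun_inv (Real.sqrt_pos.2 ht.1).ne'
  have h3 := (h2.const_mul R).smul hc
  obtain ⟨k, hk⟩ : ∃ k : ℝ, HasDerivAt (fun s => retr ε R (c s))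
      (k • c t + (R / √(ε * form ε (c t) (c t))) • c') t := by
    exact ⟨_, h3.congr_deriv (add_comm _ _)⟩
  refine ⟨k, hk, ?_⟩
  have h4 := hasDerivAt_form (ε := ε) hk hk
  have h5 : (fun s => form ε (retr ε R (c s)) (retr ε R (c s))) =ᶠ[nhds t]
      fun _ => 1 / (ε / R ^ 2) := by
    filter_upwards [hc.continuousAt.eventually (isOpen_cone.mem_nhds ht)] with s hs
    exact (retr_mem hε hR hs).1
  have h6 := h4.unique ((hasDerivAt_const t (1 / (ε / R ^ 2))).congr_of_eventuallyEq h5)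
  rw [form_comm (retr ε R (c t))] at h6
  linarith

/-- Maps that agree on the space form have the same derivative in tangent directions. -/
lemma fderiv_eq_of_eqOn (hε : ε = 1 ∨ ε = -1) (hR : 0 < R)
    {V W : (Fin (n + 1) → ℝ) → (Fin (n + 1) → ℝ)}
    (hV : Differentiable ℝ V) (hW : Differentiable ℝ W)
    (h : ∀ p ∈ SpaceForm ε R n, V p = W p) {p w : Fin (n + 1) → ℝ}
    (hp : p ∈ SpaceForm ε R n) (hw : form ε w p = 0) :
    fderiv ℝ V p w = fderiv ℝ W p w := by
  have hc : HasDerivAt (fun t : ℝ => p + t • w) w 0 := by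
    simpa using ((hasDerivAt_id (0 : ℝ)).smul_const w).const_add p
  have h0 : p + (0 : ℝ) • w = p := by simp
  have hcone : (fun t : ℝ => p + t • w) 0 ∈ Cone ε n := by
    simpa using mem_cone hε hR hp
  obtain ⟨k, hk, hk'⟩ := hasDerivAt_retr (R := R) hε hR hc hcone
  simp only [h0, scale_eq_one hε hR hp, retr_self hε hR hp, one_smul] at hk hk'
  rw [form_add_left, form_smul_left, hw, form_self hε hp, add_zero] at hk'
  have hk0 : k = 0 := by
    have : ε * R ^ 2 ≠ 0 := by
      rcases hε with h | h <;> rw [h] <;> simp [hR.ne']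
    exact (mul_eq_zero.1 hk').resolve_right this
  rw [hk0, zero_smul, zero_add] at hk
  have hr0 : retr ε R (p + (0 : ℝ) • w) = p := by rw [h0, retr_self hε hR hp]
  have hv1 := (hV (retr ε R (p + (0 : ℝ) • w))).hasFDerivAt.comp_hasDerivAt (0 : ℝ) hk
  have hw1 := (hW (retr ε R (p + (0 : ℝ) • w))).hasFDerivAt.comp_hasDerivAt (0 : ℝ) hk
  rw [hr0] at hv1 hw1
  refine hv1.unique (hw1.congr_of_eventuallyEq ?_)
  filter_upwards [hc.continuousAt.eventually (isOpen_cone.mem_nhds hcone)] with s hs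
  exact h _ (retr_mem hε hR hs)

end Retraction

/-! ### Concircular fields along arcs -/

section Arc

variable {n : ℕ} {ε R : ℝ}

/-- Two points of one sheet of the hyperboloid have nonpositive product. -/
lemma form_nonpos (hR : 0 < R) {p q : Fin (n + 1) → ℝ} (hp : p ∈ SpaceForm (-1) R n)
    (hq : q ∈ SpaceForm (-1) R n) : form (-1) p q ≤ 0 := by
  have hp1 := form_self (Or.inr rfl) hp
  have hq1 := form_self (Or.inr rfl) hq
  have hp0 := hp.2 rfl
  have hq0 := hq.2 rfl
  simp only [form, Fin.sum_univ_succ] at hp1 hq1 ⊢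
  have cs := Finset.sum_mul_sq_le_sq_mul_sq Finset.univ (fun i : Fin n => p i.succ)
    (fun i => q i.succ)
  simp only [pow_two (p (Fin.succ _)), pow_two (q (Fin.succ _))] at cs
  set A := ∑ i : Fin n, p i.succ * p i.succ
  set B := ∑ i : Fin n, q i.succ * q i.succ
  set S := ∑ i : Fin n, p i.succ * q i.succ
  have hR2 := pow_pos hR 2
  have hB : 0 ≤ B := Finset.sum_nonneg fun i _ => mul_self_nonneg _
  have hA' : A ≤ p 0 ^ 2 := by linarith
  have hB' : B ≤ q 0 ^ 2 := by linarith
  have : S ^ 2 ≤ (p 0 * q 0) ^ 2 := by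
    rw [mul_pow]
    exact cs.trans (mul_le_mul hA' hB' hB (sq_nonneg _))
  have := abs_le_of_sq_le_sq' this (mul_pos hp0 hq0).le
  linarith [this.2]

/-- The chord between independent points stays in the cone. -/
lemma chord_mem_cone (hε : ε = 1 ∨ ε = -1) (hR : 0 < R) {p q : Fin (n + 1) → ℝ}
    (hp : p ∈ SpaceForm ε R n) (hq : q ∈ SpaceForm ε R n)
    (hpq : ∀ a b : ℝ, a • p + b • q = 0 → a = 0 ∧ b = 0) {t : ℝ} (ht : t ∈ Set.Icc (0 : ℝ) 1) :
    (1 - t) • p + t • q ∈ Cone ε n := by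
  obtain ⟨ht0, ht1⟩ := ht
  rcases hε with rfl | rfl
  · refine ⟨?_, fun h => by norm_num at h⟩
    have hne : (1 - t) • p + t • q ≠ 0 := fun h => by
      have := hpq _ _ h; linarith [this.1, this.2]
    obtain ⟨i, hi⟩ := Function.ne_iff.1 hne
    simp only [form, sub_self, zero_mul, zero_add, one_mul]
    exact Finset.sum_pos' (fun j _ => mul_self_nonneg _)
      ⟨i, Finset.mem_univ _, mul_self_pos.2 hi⟩
  · have h1 : 0 ≤ 1 - t := by linarith
    constructor
    · simp only [form_add_left, form_add_right, form_smul_left, form_smul_right]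
      rw [form_self (Or.inr rfl) hp, form_self (Or.inr rfl) hq, form_comm q p]
      have h2 := form_nonpos hR hp hq
      have h3 := mul_nonneg (mul_nonneg ht0 h1) (neg_nonneg.2 h2)
      have h4 : 0 < ((1 - t) ^ 2 + t ^ 2) * R ^ 2 :=
        mul_pos (by nlinarith [sq_nonneg (2 * t - 1)]) (pow_pos hR 2)
      nlinarith
    · intro _
      have hp0 := hp.2 rfl
      have hq0 := hq.2 rfl
      simp only [Pi.add_apply, Pi.smul_apply, smul_eq_mul]
      rcases ht0.eq_or_lt with rfl | h
      · simpa using hp0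
      · have := mul_pos h hq0
        have := mul_nonneg h1 hp0.le
        linarith

/-- A concircular field moves within `span(p,q)` along the arc from `p` to `q`. -/
lemma sub_mem_span (hε : ε = 1 ∨ ε = -1) (hR : 0 < R)
    {V : (Fin (n + 1) → ℝ) → (Fin (n + 1) → ℝ)} {μ : (Fin (n + 1) → ℝ) → ℝ}
    (hV : Differentiable ℝ V)
    (hcon : ∀ p ∈ SpaceForm ε R n, ∀ w : Fin (n + 1) → ℝ, form ε w p = 0 →
        fderiv ℝ V p w = μ p • w - ((ε / R ^ 2) * form ε w (V p)) • p)
    {p q : Fin (n + 1) → ℝ} (hp : p ∈ SpaceForm ε R n) (hq : q ∈ SpaceForm ε R n)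
    (hpq : ∀ a b : ℝ, a • p + b • q = 0 → a = 0 ∧ b = 0) :
    ∃ a b : ℝ, V q - V p = a • p + b • q := by
  refine exists_of_forall_orthogonal hε p q _ fun e hpe hqe => ?_
  have hder : ∀ t ∈ Set.Icc (0 : ℝ) 1,
      HasDerivAt (fun s : ℝ => form ε (V (retr ε R ((1 - s) • p + s • q))) e) 0 t := by
    intro t ht
    have hc : HasDerivAt (fun s : ℝ => (1 - s) • p + s • q) (q - p) t := by
      have h1 := ((hasDerivAt_id t).const_sub 1).smul_const p
      have h2 := (hasDerivAt_id t).smul_const q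
      refine (h1.fun_add h2).congr_deriv ?_
      simp only [neg_smul, one_smul]; abel
    have hmem := chord_mem_cone hε hR hp hq hpq ht
    obtain ⟨k, hk, hk'⟩ := hasDerivAt_retr (R := R) hε hR hc hmem
    have h3 := (hV (retr ε R ((1 - t) • p + t • q))).hasFDerivAt.comp_hasDerivAt t hk
    rw [hcon _ (retr_mem hε hR hmem) _ hk'] at h3
    have h4 := hasDerivAt_form (ε := ε) h3 (hasDerivAt_const t e)
    refine h4.congr_deriv ?_
    simp only [retr, form_add_left, form_sub_left, form_smul_left, hpe, hqe]
    simp [form]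
  have hconst := constant_of_has_deriv_right_zero
    (fun t ht => (hder t ht).continuousAt.continuousWithinAt)
    (fun t ht => (hder t (Set.Ico_subset_Icc_self ht)).hasDerivWithinAt) 1 (by simp)
  simp only [sub_self, zero_smul, one_smul, zero_add, sub_zero, add_zero,
    retr_self hε hR hp, retr_self hε hR hq] at hconst
  rw [form_sub_left, hconst, sub_self]

end Arc

/-! ### The constant vector -/

section Constant

variable {n : ℕ} {ε R : ℝ}

/-- Linear independence of three vectors. -/
def Indep3 {m : ℕ} (p q r : Fin m → ℝ) : Prop :=
  ∀ a b c : ℝ, a • p + b • q + c • r = 0 → a = 0 ∧ b = 0 ∧ c = 0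

/-- The vector `P` attached to two points of `M` is also attached to every point independent of
them. -/
lemma transfer (hε : ε = 1 ∨ ε = -1) (hR : 0 < R)
    {V : (Fin (n + 1) → ℝ) → (Fin (n + 1) → ℝ)} {μ : (Fin (n + 1) → ℝ) → ℝ}
    (hV : Differentiable ℝ V)
    (hcon : ∀ p ∈ SpaceForm ε R n, ∀ w : Fin (n + 1) → ℝ, form ε w p = 0 →
        fderiv ℝ V p w = μ p • w - ((ε / R ^ 2) * form ε w (V p)) • p)
    {p q r P : Fin (n + 1) → ℝ} (hp : p ∈ SpaceForm ε R n) (hq : q ∈ SpaceForm ε R n)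
    (hr : r ∈ SpaceForm ε R n) (hpqr : Indep3 p q r)
    (hVp : ∃ a : ℝ, V p = P + a • p) (hVq : ∃ a : ℝ, V q = P + a • q) :
    ∃ a : ℝ, V r = P + a • r := by
  obtain ⟨a, ha⟩ := hVp
  obtain ⟨b, hb⟩ := hVq
  obtain ⟨c, d, hcd⟩ := sub_mem_span hε hR hV hcon hp hr fun x y h => by
    have := hpqr x 0 y (by rw [← h]; module)
    exact ⟨this.1, this.2.2⟩
  obtain ⟨e, f, hef⟩ := sub_mem_span hε hR hV hcon hq hr fun x y h => by
    have := hpqr 0 x y (by rw [← h]; module)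
    exact this.2
  have h1 : V r = P + (a + c) • p + d • r := by
    rw [eq_add_of_sub_eq hcd, ha]; module
  have h2 : V r = P + (b + e) • q + f • r := by
    rw [eq_add_of_sub_eq hef, hb]; module
  have h3 := hpqr (a + c) (-(b + e)) (d - f) (by
    have : (a + c) • p + -(b + e) • q + (d - f) • r
      = (P + (a + c) • p + d • r) - (P + (b + e) • q + f • r) := by module
    rw [this, ← h1, ← h2, sub_self])
  exact ⟨d, by rw [h1, h3.1]; module⟩

lemma exists_indep3 (hn : 2 ≤ n) (hε : ε = 1 ∨ ε = -1) (hR : 0 < R) :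
    ∃ p q r, p ∈ SpaceForm ε R n ∧ q ∈ SpaceForm ε R n ∧ r ∈ SpaceForm ε R n ∧ Indep3 p q r := by
  obtain ⟨k, rfl⟩ := Nat.exists_eq_add_of_le' hn
  -- A rational point of `εa² + b² = ε`.
  obtain ⟨a, b, ha, hb, hab⟩ : ∃ a b : ℝ, 0 < a ∧ b ≠ 0 ∧ ε * a ^ 2 + b ^ 2 = ε := by
    rcases hε with rfl | rfl
    · exact ⟨3 / 5, 4 / 5, by norm_num, by norm_num, by norm_num⟩
    · exact ⟨5 / 4, 3 / 4, by norm_num, by norm_num, by norm_num⟩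
  have hC : 1 / (ε / R ^ 2) = ε * R ^ 2 := by
    rcases hε with h | h <;> rw [h] <;> simp [div_neg]
  have h10 : (1 : Fin (k + 2 + 1)) ≠ 0 := by simp
  have h20 : (2 : Fin (k + 2 + 1)) ≠ 0 := by
    rw [Ne, Fin.ext_iff, Fin.val_two]; simp
  have h12 : (1 : Fin (k + 2 + 1)) ≠ 2 := by
    rw [Ne, Fin.ext_iff, Fin.val_two]; simp
  have hmem : ∀ (x y : ℝ) (i : Fin (k + 2 + 1)), i ≠ 0 → 0 < x → ε * x ^ 2 + y ^ 2 = ε →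
      ((R * x) • Pi.single 0 1 + (R * y) • Pi.single i 1 : Fin (k + 2 + 1) → ℝ)
        ∈ SpaceForm ε R (k + 2) := by
    intro x y i hi hx hxy
    constructor
    · rw [hC]
      simp only [form_add_right, form_smul_right, form_single_right]
      simp [hi, hi.symm]
      linear_combination R ^ 2 * hxy
    · intro _
      simp [hi.symm]
      positivity
  refine ⟨_, _, _, hmem 1 0 1 h10 one_pos (by ring), hmem a b 1 h10 ha hab,
    hmem a b 2 h20 ha hab, ?_⟩
  intro x y z h
  have e0 := congrFun h 0
  have e1 := congrFun h 1
  have e2 := congrFun h 2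
  simp [h10, h20, h12, h10.symm, h20.symm, h12.symm, hR.ne', hb] at e0 e1 e2
  subst e1 e2
  simpa [hR.ne'] using e0

/-- A concircular field is a constant vector up to radial terms. -/
lemma exists_constant (hn : 2 ≤ n) (hε : ε = 1 ∨ ε = -1) (hR : 0 < R)
    {V : (Fin (n + 1) → ℝ) → (Fin (n + 1) → ℝ)} {μ : (Fin (n + 1) → ℝ) → ℝ}
    (hV : Differentiable ℝ V)
    (hcon : ∀ p ∈ SpaceForm ε R n, ∀ w : Fin (n + 1) → ℝ, form ε w p = 0 →
        fderiv ℝ V p w = μ p • w - ((ε / R ^ 2) * form ε w (V p)) • p) :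
    ∃ P, ∀ q ∈ SpaceForm ε R n, ∃ a : ℝ, V q = P + a • q := by
  obtain ⟨p₁, p₂, p₃, h₁, h₂, h₃, hind⟩ := exists_indep3 hn hε hR
  obtain ⟨a, b, hab⟩ := sub_mem_span hε hR hV hcon h₁ h₂ fun x y h => by
    have := hind x y 0 (by rw [← h]; module)
    exact ⟨this.1, this.2.1⟩
  have hP₁ : ∃ x : ℝ, V p₁ = (V p₁ + a • p₁) + x • p₁ := ⟨-a, by module⟩
  have hP₂ : ∃ x : ℝ, V p₂ = (V p₁ + a • p₁) + x • p₂ :=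
    ⟨b, by rw [eq_add_of_sub_eq hab]; module⟩
  have hP₃ := transfer hε hR hV hcon h₁ h₂ h₃ hind hP₁ hP₂
  refine ⟨V p₁ + a • p₁, fun q hq => ?_⟩
  by_cases hq12 : Indep3 p₁ p₂ q
  · exact transfer hε hR hV hcon h₁ h₂ hq hq12 hP₁ hP₂
  -- Otherwise `q = x p₁ + y p₂`, and `q` can be exchanged for `p₁` or `p₂`.
  obtain ⟨x, y, hxy⟩ : ∃ x y : ℝ, q = x • p₁ + y • p₂ := by
    unfold Indep3 at hq12
    push Not at hq12
    obtain ⟨u, v, w, h0, hne⟩ := hq12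
    have hw : w ≠ 0 := by
      rintro rfl
      have := hind u v 0 (by rw [← h0]; module)
      exact hne this.1 this.2.1 rfl
    refine ⟨-u / w, -v / w, ?_⟩
    have : q = w⁻¹ • (u • p₁ + v • p₂ + w • q) + ((-u / w) • p₁ + (-v / w) • p₂) := by
      match_scalars <;> field_simp <;> ring
    rw [h0] at this
    simpa using this
  have hq0 : q ≠ 0 := by
    rintro rfl
    have := (mem_cone hε hR hq).1
    simp [form] at this
  by_cases hx : x = 0
  · have hy : y ≠ 0 := by rintro rfl; simp [hx] at hxy; exact hq0 hxy
    refine transfer hε hR hV hcon h₁ h₃ hq (fun u v w h => ?_) hP₁ hP₃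
    have := hind (u + w * x) (w * y) v (by rw [← h, hxy]; module)
    have hw : w = 0 := (mul_eq_zero.1 this.2.1).resolve_right hy
    simp [hw] at this
    exact ⟨this.1, this.2, hw⟩
  · refine transfer hε hR hV hcon h₂ h₃ hq (fun u v w h => ?_) hP₂ hP₃
    have := hind (w * x) (u + w * y) v (by rw [← h, hxy]; module)
    have hw : w = 0 := (mul_eq_zero.1 this.1).resolve_right hx
    simp [hw] at this
    exact ⟨this.1, this.2, hw⟩

lemma exists_tangent_ne_zero (hn : 2 ≤ n) (p : Fin (n + 1) → ℝ) :
    ∃ w : Fin (n + 1) → ℝ, form ε w p = 0 ∧ w ≠ 0 := by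
  obtain ⟨k, rfl⟩ := Nat.exists_eq_add_of_le' hn
  have h10 : (1 : Fin (k + 2 + 1)) ≠ 0 := by simp
  have h20 : (2 : Fin (k + 2 + 1)) ≠ 0 := by
    rw [Ne, Fin.ext_iff, Fin.val_two]; simp
  have h12 : (1 : Fin (k + 2 + 1)) ≠ 2 := by
    rw [Ne, Fin.ext_iff, Fin.val_two]; simp
  by_cases hp : p 1 = 0
  · refine ⟨Pi.single 1 1, ?_, fun h => by simpa using congrFun h 1⟩
    rw [form_comm, form_single_right, if_neg h10, hp]
  · refine ⟨p 1 • Pi.single 2 1 - p 2 • Pi.single 1 1, ?_, fun h => hp ?_⟩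
    · rw [form_sub_left, form_smul_left, form_smul_left, form_comm, form_single_right,
        form_comm, form_single_right, if_neg h10, if_neg h20]
      ring
    · simpa [h12, h12.symm] using congrFun h 2

/-- The derivative of the tangential part of a constant vector. -/
lemma hasFDerivAt_tangential (P p : Fin (n + 1) → ℝ) (C : ℝ) :
    Differentiable ℝ (fun x : Fin (n + 1) → ℝ => P - (C * form ε P x) • x) ∧
    ∀ w, fderiv ℝ (fun x : Fin (n + 1) → ℝ => P - (C * form ε P x) • x) p w
      = -((C * form ε P p) • w) - (C * form ε P w) • p := by
  have hL : ∀ x, HasFDerivAt (fun x : Fin (n + 1) → ℝ => form ε P x)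
      (formL ε P).toContinuousLinearMap x :=
    fun x => (formL ε P).toContinuousLinearMap.hasFDerivAt
  have hd := fun x => (((hL x).const_mul C).smul (hasFDerivAt_id x)).const_sub P
  refine ⟨fun x => (hd x).differentiableAt, fun w => ?_⟩
  have : fderiv ℝ (fun x : Fin (n + 1) → ℝ => P - (C * form ε P x) • x) p = _ := (hd p).fderiv
  rw [this]
  simp [formL]
  module

end Constant


/-- A smooth map `V`, tangent along M^n(C), is a concircular vector field on M^n(C)
with concircular factor `μ` if and only if `V` is the tangential part of a constant
vector field `p₀` of ℝ^{n+1}; in that case `μ p = -C⟨p₀,p⟩`. -/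
theorem concircular_iff_tangential_part_of_constant
    (n : ℕ) (hn : 2 ≤ n) (ε R : ℝ) (hε : ε = 1 ∨ ε = -1) (hR : 0 < R)
    (V : (Fin (n + 1) → ℝ) → (Fin (n + 1) → ℝ)) (μ : (Fin (n + 1) → ℝ) → ℝ)
    (hV : ContDiff ℝ (⊤ : ℕ∞) V) (hμ : ContDiff ℝ (⊤ : ℕ∞) μ)
    (htan : ∀ p ∈ SpaceForm ε R n, form ε (V p) p = 0) :
    (∀ p ∈ SpaceForm ε R n, ∀ w : Fin (n + 1) → ℝ, form ε w p = 0 →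
        fderiv ℝ V p w = μ p • w - ((ε / R ^ 2) * form ε w (V p)) • p) ↔
    ∃ p₀ : Fin (n + 1) → ℝ,
      (∀ p ∈ SpaceForm ε R n, V p = p₀ - ((ε / R ^ 2) * form ε p₀ p) • p) ∧
      (∀ p ∈ SpaceForm ε R n, μ p = -((ε / R ^ 2) * form ε p₀ p)) := by
  have hVd : Differentiable ℝ V := hV.differentiable (by simp)
  have hC0 : ε / R ^ 2 ≠ 0 :=
    div_ne_zero (by rcases hε with h | h <;> rw [h] <;> norm_num) (pow_pos hR 2).ne'
  have hself : ∀ p ∈ SpaceForm ε R n, ε / R ^ 2 * form ε p p = 1 := fun p hp => by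
    rw [hp.1, mul_one_div_cancel hC0]
  have hder : ∀ P, (∀ p ∈ SpaceForm ε R n, V p = P - ((ε / R ^ 2) * form ε P p) • p) →
      ∀ p ∈ SpaceForm ε R n, ∀ w, form ε w p = 0 → fderiv ℝ V p w
        = -((ε / R ^ 2 * form ε P p) • w) - (ε / R ^ 2 * form ε w (V p)) • p := by
    intro P hP p hp w hw
    obtain ⟨h1, h2⟩ := hasFDerivAt_tangential (ε := ε) P p (ε / R ^ 2)
    rw [fderiv_eq_of_eqOn hε hR hVd h1 hP hp hw, h2, hP p hp, form_sub_right, form_smul_right, hw,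
      form_comm w P, mul_zero, sub_zero]
  constructor
  · intro hcon
    obtain ⟨P, hP⟩ := exists_constant hn hε hR hVd hcon
    have hVP : ∀ p ∈ SpaceForm ε R n, V p = P - ((ε / R ^ 2) * form ε P p) • p := by
      intro p hp
      obtain ⟨a, ha⟩ := hP p hp
      have h1 := htan p hp
      rw [ha, form_add_left, form_smul_left] at h1
      have h2 : a = -(ε / R ^ 2 * form ε P p) := by
        linear_combination (ε / R ^ 2) * h1 - a * hself p hp
      rw [ha, h2]; module
    refine ⟨P, hVP, fun p hp => ?_⟩
    obtain ⟨w, hw, hw0⟩ := exists_tangent_ne_zero (ε := ε) hn p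
    have h1 := hcon p hp w hw
    rw [hder P hVP p hp w hw, sub_left_inj, ← neg_smul] at h1
    exact (smul_left_injective ℝ hw0 h1).symm
  · rintro ⟨P, hVP, hμP⟩ p hp w hw
    rw [hder P hVP p hp w hw, hμP p hp, neg_smul]
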